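/- Let N ≥ 1, H = (H₁,…,H_N) ∈ (0,1)^N and let d be a real number with 0 < d < Σ_{ℓ=1}^N 1/H_ℓ. Then there is a finite constant C > 0 such that for every s ∈ [0,1]^N, ∫_{[0,1]^N} ( Σ_{ℓ=1}^N |s_ℓ − t_ℓ|^{H_ℓ} )^{−d} dt ≤ C; in particular the function u ↦ (Σ_{ℓ=1}^N |u_ℓ|^{H_ℓ})^{−d} is Lebesgue integrable on [−1,1]^N. -/

import Mathlib

open MeasureTheory

lemma aux_one (r : ℝ) (hr : -1 < r) :
    Integrable (Set.indicator (Set.Icc (-1:ℝ) 1) (fun x => |x| ^ r)) := by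
  rw [integrable_indicator_iff measurableSet_Icc]
  have h1 : IntervalIntegrable (fun x : ℝ => |x| ^ r) volume 0 1 := by
    refine (intervalIntegral.intervalIntegrable_rpow' (a := 0) (b := 1) hr).congr ?_
    intro x hx
    rw [Set.uIoc_of_le zero_le_one] at hx
    simp only [abs_of_pos hx.1]
  have h2 : IntervalIntegrable (fun x : ℝ => |x| ^ r) volume (-1) 0 := by
    rw [IntervalIntegrable.iff_comp_neg]
    simpa using h1.symm
  have h3 := h2.trans h1
  rw [intervalIntegrable_iff_integrableOn_Icc_of_le (by norm_num)] at h3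
  exact h3

lemma aux_amgm (N : ℕ) (hN : 1 ≤ N) (H : Fin N → ℝ)
    (hH : ∀ ℓ, H ℓ ∈ Set.Ioo (0:ℝ) 1) (d : ℝ) (hd0 : 0 < d)
    (u : Fin N → ℝ) (hu : ∀ i, u i ≠ 0) :
    (∑ ℓ, |u ℓ| ^ (H ℓ)) ^ (-d) ≤ ∏ ℓ, |u ℓ| ^ (-(d / ∑ ℓ, 1 / H ℓ)) := by
  have : Nonempty (Fin N) := ⟨⟨0, hN⟩⟩
  set Q := ∑ ℓ, 1 / H ℓ with hQ
  have hQ0 : 0 < Q := Finset.sum_pos (fun i _ => one_div_pos.2 (hH i).1) Finset.univ_nonempty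
  set S := ∑ ℓ, |u ℓ| ^ (H ℓ) with hS
  have hp : ∀ i, 0 < |u i| := fun i => abs_pos.2 (hu i)
  have hS0 : 0 < S := Finset.sum_pos (fun i _ => Real.rpow_pos_of_pos (hp i) _) Finset.univ_nonempty
  have key : S ^ (-d) = ∏ ℓ, S ^ (-(d / Q) * (1 / H ℓ)) := by
    rw [← Real.rpow_sum_of_pos hS0, ← Finset.mul_sum, ← hQ]
    congr 1
    field_simp
  rw [key]
  refine Finset.prod_le_prod (fun i _ => (Real.rpow_pos_of_pos hS0 _).le) (fun i _ => ?_)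
  have hle : |u i| ^ (H i) ≤ S :=
    Finset.single_le_sum (f := fun ℓ => |u ℓ| ^ (H ℓ))
      (fun j _ => (Real.rpow_pos_of_pos (hp j) _).le) (Finset.mem_univ i)
  have hHi := (hH i).1
  have e : |u i| ^ (-(d / Q)) = (|u i| ^ (H i)) ^ (-(d / Q) * (1 / H i)) := by
    rw [← Real.rpow_mul (hp i).le]
    congr 1
    field_simp
  rw [e]
  refine Real.rpow_le_rpow_of_nonpos (Real.rpow_pos_of_pos (hp i) _) hle ?_
  have : 0 < d / Q * (1 / H i) := by positivity
  linarith

lemma aux_int (N : ℕ) (hN : 1 ≤ N) (H : Fin N → ℝ)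
    (hH : ∀ ℓ, H ℓ ∈ Set.Ioo (0:ℝ) 1) (d : ℝ) (hd0 : 0 < d)
    (hd : d < ∑ ℓ, 1 / H ℓ) :
    IntegrableOn (fun u : Fin N → ℝ => (∑ ℓ, |u ℓ| ^ (H ℓ)) ^ (-d))
        (Set.Icc (-1 : Fin N → ℝ) 1) := by
  set r := -(d / ∑ ℓ, 1 / H ℓ) with hr
  have hr1 : -1 < r := by
    have := (div_lt_one (hd0.trans hd)).2 hd
    linarith
  have hg : Integrable (fun u : Fin N → ℝ =>
      ∏ i, Set.indicator (Set.Icc (-1:ℝ) 1) (fun x => |x| ^ r) (u i)) :=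
    Integrable.fintype_prod (fun _ => aux_one r hr1)
  refine Integrable.mono' (hg.restrict (s := Set.Icc (-1 : Fin N → ℝ) 1)) ?_ ?_
  · apply Measurable.aestronglyMeasurable
    fun_prop
  · have hne : ∀ᵐ u : Fin N → ℝ, ∀ i, u i ≠ 0 :=
      ae_all_iff.2 (fun i => Measure.ae_eval_ne (fun _ => volume) i 0)
    filter_upwards [ae_restrict_mem measurableSet_Icc, ae_restrict_of_ae hne] with u hu hu0
    rw [Real.norm_of_nonneg (Real.rpow_nonneg
      (Finset.sum_nonneg fun i _ => Real.rpow_nonneg (abs_nonneg _) _) _)]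
    refine (aux_amgm N hN H hH d hd0 u hu0).trans (le_of_eq ?_)
    refine Finset.prod_congr rfl fun i _ => ?_
    rw [Set.indicator_of_mem (show u i ∈ Set.Icc (-1:ℝ) 1 from ⟨hu.1 i, hu.2 i⟩)]

theorem statement_14 (N : ℕ) (hN : 1 ≤ N) (H : Fin N → ℝ)
    (hH : ∀ ℓ, H ℓ ∈ Set.Ioo (0:ℝ) 1) (d : ℝ) (hd0 : 0 < d)
    (hd : d < ∑ ℓ, 1 / H ℓ) :
    ∃ C : ℝ, 0 < C ∧
      (∀ s ∈ Set.Icc (0 : Fin N → ℝ) 1,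
        (∫⁻ t in Set.Icc (0 : Fin N → ℝ) 1,
            ENNReal.ofReal ((∑ ℓ, |s ℓ - t ℓ| ^ (H ℓ)) ^ (-d)))
          ≤ ENNReal.ofReal C) ∧
      IntegrableOn (fun u : Fin N → ℝ => (∑ ℓ, |u ℓ| ^ (H ℓ)) ^ (-d))
        (Set.Icc (-1 : Fin N → ℝ) 1) := by
  have hI := aux_int N hN H hH d hd0 hd
  set f : (Fin N → ℝ) → ℝ := fun u => (∑ ℓ, |u ℓ| ^ (H ℓ)) ^ (-d) with hf
  set F : (Fin N → ℝ) → ENNReal :=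
    Set.indicator (Set.Icc (-1 : Fin N → ℝ) 1) (fun u => ENNReal.ofReal (f u)) with hF
  have hfin : ∫⁻ u, F u ≠ ⊤ := by
    rw [hF, lintegral_indicator measurableSet_Icc]
    exact hI.lintegral_lt_top.ne
  refine ⟨(∫⁻ u, F u).toReal + 1, by positivity, fun s hs => ?_, hI⟩
  calc (∫⁻ t in Set.Icc (0 : Fin N → ℝ) 1,
            ENNReal.ofReal ((∑ ℓ, |s ℓ - t ℓ| ^ (H ℓ)) ^ (-d)))
      ≤ ∫⁻ t in Set.Icc (0 : Fin N → ℝ) 1, F (s - t) := by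
        refine setLIntegral_mono' measurableSet_Icc fun t ht => ?_
        have hm : s - t ∈ Set.Icc (-1 : Fin N → ℝ) 1 := by
          constructor <;> intro i
          · have h1 := hs.1 i
            have h2 := ht.2 i
            simp only [Pi.zero_apply, Pi.one_apply, Pi.neg_apply, Pi.sub_apply] at *
            linarith
          · have h1 := hs.2 i
            have h2 := ht.1 i
            simp only [Pi.zero_apply, Pi.one_apply, Pi.sub_apply] at *
            linarith
        rw [hF, Set.indicator_of_mem hm]
        simp [hf]
    _ ≤ ∫⁻ t, F (s - t) := setLIntegral_le_lintegral _ _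
    _ = ∫⁻ u, F u := lintegral_sub_left_eq_self F s
    _ = ENNReal.ofReal (∫⁻ u, F u).toReal := (ENNReal.ofReal_toReal hfin).symm
    _ ≤ _ := ENNReal.ofReal_le_ofReal (by linarith)
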